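/- Let K > 0, T > 0, a ≥ 0, and let u : [0, T] → [0,∞) be continuous on [0,T], differentiable on (0,T), with u(0) = a and u'(t) ≤ K·u(t) − 2K·a·e^{−Kt}/(1 − e^{−2KT}) for all t ∈ (0,T). Then for every t ∈ [0,T], u(t) ≤ a·(e^{−Kt} − e^{−K(2T−t)})/(1 − e^{−2KT}) ≤ a; in particular u(T) = 0. -/

import Mathlib

/-- Deterministic comparison argument for the first coupling step (Proposition 2.1):
if `u(0) = a` and `u' ≤ K u − 2K a e^{−Kt}/(1 − e^{−2KT})` on `(0,T)`, then
`u(t) ≤ a (e^{−Kt} − e^{−K(2T−t)})/(1 − e^{−2KT}) ≤ a` on `[0,T]`; in particular `u(T) = 0`. -/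
theorem coupling_first_component_comparison
    (K T a : ℝ) (hK : 0 < K) (hT : 0 < T) (ha : 0 ≤ a)
    (u u' : ℝ → ℝ)
    (hu_cont : ContinuousOn u (Set.Icc 0 T))
    (hu_nonneg : ∀ t ∈ Set.Icc 0 T, 0 ≤ u t)
    (hu0 : u 0 = a)
    (hu_deriv : ∀ t ∈ Set.Ioo 0 T, HasDerivAt u (u' t) t)
    (hu_ineq : ∀ t ∈ Set.Ioo 0 T,
      u' t ≤ K * u t - 2 * K * a * Real.exp (-K * t) / (1 - Real.exp (-2 * K * T))) :
    (∀ t ∈ Set.Icc 0 T,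
        u t ≤ a * (Real.exp (-K * t) - Real.exp (-K * (2 * T - t)))
                / (1 - Real.exp (-2 * K * T))
        ∧ a * (Real.exp (-K * t) - Real.exp (-K * (2 * T - t)))
                / (1 - Real.exp (-2 * K * T)) ≤ a)
    ∧ u T = 0 := by
  have hF1 : Real.exp (-2 * K * T) < 1 := by
    rw [Real.exp_lt_one_iff]
    nlinarith [mul_pos hK hT]
  have hF0 := Real.exp_pos (-2 * K * T)
  have hsplit : ∀ t, Real.exp (-K * (2 * T - t)) = Real.exp (-2 * K * T) * Real.exp (K * t) := by
    intro t
    rw [← Real.exp_add]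
    congr 1
    ring
  have hEG : ∀ t, Real.exp (-K * t) * Real.exp (K * t) = 1 := by
    intro t
    rw [← Real.exp_add]
    simp
  set F := Real.exp (-2 * K * T) with hF
  have hD : 0 < 1 - F := by linarith
  have hE : ∀ t, HasDerivAt (fun s => Real.exp (-K * s)) (Real.exp (-K * t) * (-K)) t := by
    intro t
    have h := ((hasDerivAt_id t).const_mul (-K)).exp
    simpa using h
  let w : ℝ → ℝ := fun t => Real.exp (-K * t) * u t - a / (1 - F) * Real.exp (-K * t) ^ 2
  have hw : ∀ t ∈ Set.Ioo 0 T, HasDerivAt w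
      ((Real.exp (-K * t) * (-K) * u t + Real.exp (-K * t) * u' t)
        - a / (1 - F) * (2 * Real.exp (-K * t) * (Real.exp (-K * t) * (-K)))) t := by
    intro t ht
    have h := ((hE t).mul (hu_deriv t ht)).sub (((hE t).pow 2).const_mul (a / (1 - F)))
    norm_num only [Nat.cast_ofNat, pow_one] at h
    exact h
  have hanti : AntitoneOn w (Set.Icc 0 T) := by
    apply antitoneOn_of_deriv_nonpos (convex_Icc 0 T)
    · have hc : Continuous (fun s => Real.exp (-K * s)) := by fun_prop
      exact (hc.continuousOn.mul hu_cont).sub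
        ((continuous_const.mul (hc.pow 2)).continuousOn)
    · intro t ht
      rw [interior_Icc] at ht
      exact (hw t ht).differentiableAt.differentiableWithinAt
    · intro t ht
      rw [interior_Icc] at ht
      rw [(hw t ht).deriv]
      have h1 := hu_ineq t ht
      have h2 := mul_le_mul_of_nonneg_left h1 (Real.exp_pos (-K * t)).le
      have h3 : Real.exp (-K * t) * (K * u t - 2 * K * a * Real.exp (-K * t) / (1 - F))
          = Real.exp (-K * t) * K * u t
            - a / (1 - F) * (2 * Real.exp (-K * t) * (Real.exp (-K * t) * K)) := by ring
      rw [h3] at h2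
      linarith
  have hmain : ∀ t ∈ Set.Icc 0 T,
      u t ≤ a * (Real.exp (-K * t) - Real.exp (-K * (2 * T - t))) / (1 - F) := by
    intro t ht
    have h := hanti (Set.left_mem_Icc.mpr hT.le) ht ht.1
    simp only [w, mul_zero, Real.exp_zero, hu0, one_mul, one_pow, mul_one] at h
    have h2 := mul_le_mul_of_nonneg_right h (Real.exp_pos (K * t)).le
    have h3 := hEG t
    rw [hsplit]
    have e1 : (Real.exp (-K * t) * u t - a / (1 - F) * Real.exp (-K * t) ^ 2) * Real.exp (K * t)
        = u t - a / (1 - F) * Real.exp (-K * t) := by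
      linear_combination (u t - a / (1 - F) * Real.exp (-K * t)) * h3
    have e2 : a * (Real.exp (-K * t) - F * Real.exp (K * t)) / (1 - F)
        = a / (1 - F) * Real.exp (-K * t) + (a - a / (1 - F)) * Real.exp (K * t) := by
      field_simp
      ring
    rw [e1] at h2
    rw [e2]
    linarith
  refine ⟨fun t ht => ⟨hmain t ht, ?_⟩, ?_⟩
  · rw [hsplit, div_le_iff₀ hD]
    apply mul_le_mul_of_nonneg_left _ ha
    have hKt : 0 ≤ K * t := mul_nonneg hK.le ht.1
    have h1 : Real.exp (-K * t) ≤ 1 := by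
      rw [Real.exp_le_one_iff]
      linarith
    have h2 : 1 ≤ Real.exp (K * t) := Real.one_le_exp hKt
    nlinarith
  · have hTm : T ∈ Set.Icc 0 T := Set.right_mem_Icc.mpr hT.le
    have h := hmain T hTm
    have e : 2 * T - T = T := by ring
    rw [e, sub_self, mul_zero, zero_div] at h
    exact le_antisymm h (hu_nonneg T hTm)
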